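/- Let G be a branch group acting on a rooted tree T and let H be a subgroup of finite index in G. Then b(H) is finite and equals the maximum, over all n, of the number of H-orbits on the layer L_n. In particular b(H) ≤ |G:H|. -/

import Mathlib

/-!  Common definitions: rooted trees of type `(m n)`, tree automorphisms,
rigid stabilizers, branch groups, and auxiliary notions. -/

universe u

/-- Vertices of the rooted tree of type `m`: finite sequences `(x_0, …, x_{n-1})`
with `x_i ∈ {1, …, m i}` (encoded as `Fin (m i)`). -/
def Vertex (m : ℕ → ℕ) : Type := Σ n : ℕ, ∀ i : Fin n, Fin (m i)

namespace Vertex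

variable {m : ℕ → ℕ}

/-- The level of a vertex: its length. -/
def level (v : Vertex m) : ℕ := v.1

/-- `v` is a (weak) prefix of `w`; i.e. `w` lies in the subtree `T_v`
(`w = v` or `w` is a descendant of `v`). -/
def IsPrefix (v w : Vertex m) : Prop :=
  ∃ h : v.1 ≤ w.1, ∀ i : Fin v.1, w.2 (Fin.castLE h i) = v.2 i

/-- `w` is a child (one-step extension) of `v`. -/
def IsChild (v w : Vertex m) : Prop := w.1 = v.1 + 1 ∧ IsPrefix v w

end Vertex

/-- The `n`-th layer `L_n` of the tree: all vertices of level `n`. -/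
def layer (m : ℕ → ℕ) (n : ℕ) : Set (Vertex m) := {v | v.1 = n}

section Rist

variable {m : ℕ → ℕ} (G : Type*) [Group G] [MulAction G (Vertex m)]

/-- The rigid stabilizer of a vertex `v`: all elements fixing every vertex
outside the subtree `T_v`. -/
def rist (v : Vertex m) : Subgroup G :=
  ⨅ w ∈ {w : Vertex m | ¬ Vertex.IsPrefix v w}, MulAction.stabilizer G w

/-- The subgroup generated by the rigid stabilizers of the vertices in `X`. -/
def ristSet (X : Set (Vertex m)) : Subgroup G := ⨆ v ∈ X, rist G v

/-- `rist_G(n)`, the rigid stabilizer of the `n`-th layer. -/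
def ristLayer (m : ℕ → ℕ) (G : Type*) [Group G] [MulAction G (Vertex m)] (n : ℕ) :
    Subgroup G :=
  ristSet G (layer m n)

/-- The orbit of the vertex `v` under a subgroup `H ≤ G`. -/
def subOrbit (H : Subgroup G) (v : Vertex m) : Set (Vertex m) :=
  {w | ∃ h ∈ H, h • v = w}

/-- The set of orbits of a subgroup `H ≤ G` on a set `X` of vertices. -/
def orbitsOn (H : Subgroup G) (X : Set (Vertex m)) : Set (Set (Vertex m)) :=
  (fun v => subOrbit G H v) '' X

end Rist

/-- `G` is a branch group on the rooted tree of type `m` (with respect to the given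
action): the action is faithful and by tree automorphisms, `G` acts transitively on
each layer, and each `rist_G(n)` has finite index in `G`. -/
structure IsBranchGroup (m : ℕ → ℕ) (G : Type*) [Group G] [MulAction G (Vertex m)] :
    Prop where
  faithful : ∀ g : G, (∀ v : Vertex m, g • v = v) → g = 1
  aut : ∀ (g : G) (v w : Vertex m), Vertex.IsChild v w ↔ Vertex.IsChild (g • v) (g • w)
  trans : ∀ v w : Vertex m, v.1 = w.1 → ∃ g : G, g • v = w
  ristFiniteIndex : ∀ n : ℕ, (ristLayer m G n).FiniteIndex

/-- A group is virtually soluble if it has a soluble subgroup of finite index. -/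
def VirtuallySolvable (Γ : Type*) [Group Γ] : Prop :=
  ∃ S : Subgroup Γ, S.FiniteIndex ∧ IsSolvable ↥S

/-- A group is virtually abelian if it has an abelian subgroup of finite index. -/
def VirtuallyAbelian (Γ : Type*) [Group Γ] : Prop :=
  ∃ S : Subgroup Γ, S.FiniteIndex ∧ ∀ a ∈ S, ∀ b ∈ S, a * b = b * a

/-- For subgroups `A ≤ B` of a group with `A` normalised by `B`, this says that the
factor `B/A` belongs to the class `𝔛`. -/
def FactorIn (𝔛 : (Γ : Type u) → [inst : Group Γ] → Prop) {G : Type u} [Group G]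
    (A B : Subgroup G) : Prop :=
  ∃ hn : (A.subgroupOf B).Normal, letI := hn; 𝔛 (↥B ⧸ A.subgroupOf B)

/-- The factor `B/A` is virtually soluble. -/
def FactorVirtuallySolvable {G : Type*} [Group G] (A B : Subgroup G) : Prop :=
  ∃ hn : (A.subgroupOf B).Normal,
    letI := hn; VirtuallySolvable (↥B ⧸ A.subgroupOf B)

/-- The factor `B/A` is virtually abelian. -/
def FactorVirtuallyAbelian {G : Type*} [Group G] (A B : Subgroup G) : Prop :=
  ∃ hn : (A.subgroupOf B).Normal,
    letI := hn; VirtuallyAbelian (↥B ⧸ A.subgroupOf B)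

/-- `Γ` has `r` infinite normal subgroups that generate their direct product in `Γ`:
each of them intersects trivially the subgroup generated by the others. -/
def HasIndepFamily (Γ : Type*) [Group Γ] (r : ℕ) : Prop :=
  ∃ N : Fin r → Subgroup Γ, (∀ i, (N i).Normal) ∧ (∀ i, Infinite ↥(N i)) ∧
    ∀ i, N i ⊓ (⨆ j ∈ ({i}ᶜ : Set (Fin r)), N j) = ⊥

/-!
The rigid stabilizers of `G` are nontrivial, hence infinite because they contain each other in
strictly descending chains; so those of the finite-index subgroup `H` are again nontrivial, and
everything can be read off from the action of `H`.

If `O ≠ O'` are `H`-orbits on `L_n`, the subtrees hanging from `O` are disjoint from those hanging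
from `O'`. The elements of `H` supported below `O` form an infinite normal subgroup, and the
subgroups obtained from the distinct orbits are independent.

Conversely, a normal subgroup `N` of `H` that moves a vertex `v` contains the commutator subgroup of
`rist_H(v)`, which is nontrivial. If the normal subgroups `N_i` are pairwise disjoint then each
vertex is moved by at most one of them; vertices of a common layer moved by the different `N_i`
therefore lie in different orbits.
-/

section GroupTheory

open MulAction
open scoped Pointwise commutatorElement

variable {G : Type*} [Group G]

lemma finite_of_disjoint_of_finiteIndex {H K : Subgroup G} [H.FiniteIndex] (h : Disjoint H K) :
    Finite K := by
  have hbot : (⊥ : Subgroup K).FiniteIndex := Subgroup.subgroupOf_eq_bot.2 h ▸ inferInstance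
  exact (Subgroup.finite_iff_finite_and_finiteIndex ⊥).2 ⟨inferInstance, hbot⟩

lemma commutatorElement_mem_of_commute_conj {N : Subgroup G} [N.Normal] {g a b : G} (hg : g ∈ N)
    (h : Commute (g * a * g⁻¹) b) : ⁅a, b⁆ ∈ N := by
  -- Modulo `N` the elements `a` and `g * a * g⁻¹` agree.
  have hmod := h.map (QuotientGroup.mk' N)
  have hg_one : QuotientGroup.mk' N g = 1 := (QuotientGroup.eq_one_iff g).2 hg
  rwa [map_mul, map_mul, map_inv, hg_one, one_mul, inv_one, mul_one,
    ← commutatorElement_eq_one_iff_commute, ← map_commutatorElement, QuotientGroup.mk'_apply,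
    QuotientGroup.eq_one_iff] at hmod

lemma hasIndepFamily_iff {r : ℕ} :
    HasIndepFamily G r ↔ ∃ N : Fin r → Subgroup G,
      (∀ i, (N i).Normal) ∧ (∀ i, Infinite (N i)) ∧ iSupIndep N := by
  simp only [HasIndepFamily, iSupIndep_def, disjoint_iff, Set.mem_compl_singleton_iff]

lemma hasIndepFamily_card {ι : Type*} [Finite ι] {N : ι → Subgroup G}
    (hnormal : ∀ i, (N i).Normal) (hinf : ∀ i, Infinite (N i)) (hind : iSupIndep N) :
    HasIndepFamily G (Nat.card ι) :=
  let e := (Finite.equivFin ι).symm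
  hasIndepFamily_iff.2 ⟨N ∘ e, fun i => hnormal (e i), fun i => hinf (e i), hind.comp e.injective⟩

variable {α : Type*} [MulAction G α]

lemma card_image_orbit_le_index (H : Subgroup G) [H.FiniteIndex] {s : Set α} {a : α}
    (hs : s ⊆ orbit G a) : Nat.card (orbit H '' s) ≤ H.index := by
  let f : G ⧸ H → Set α := Quotient.lift (fun g => orbit H (g⁻¹ • a)) fun g k hgk => by
    have hmem : g⁻¹ * k ∈ H := QuotientGroup.leftRel_apply.1 hgk
    exact orbit_eq_iff.2 ⟨⟨g⁻¹ * k, hmem⟩, by simp [Subgroup.smul_def, mul_smul]⟩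
  have hsub : orbit H '' s ⊆ Set.range f := by
    rintro _ ⟨b, hb, rfl⟩
    obtain ⟨g, rfl⟩ := hs hb
    exact ⟨(g⁻¹ : G), by simp [f]⟩
  exact (Nat.card_mono (Set.finite_range f) hsub).trans (Finite.card_range_le f)

lemma fixingSubgroup_compl_normal {s : Set α} (hs : ∀ g : G, g • s = s) :
    (fixingSubgroup G sᶜ).Normal :=
  ⟨fun _ hx g => Set.conj_mem_fixingSubgroup (by rw [Set.smul_set_compl, hs]) hx⟩

section Faithful

variable [FaithfulSMul G α]

lemma exists_notMem_fixedPoints {N : Subgroup G} (hN : N ≠ ⊥) : ∃ a : α, a ∉ fixedPoints N α := by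
  contrapose! hN
  refine (Subgroup.eq_bot_iff_forall N).2 fun g hg =>
    FaithfulSMul.eq_of_smul_eq_smul fun a : α => ?_
  simpa using hN a ⟨g, hg⟩

lemma disjoint_fixingSubgroup_compl (s : Set α) :
    Disjoint (fixingSubgroup G s) (fixingSubgroup G sᶜ) := by
  rw [disjoint_iff, ← fixingSubgroup_union, Set.union_compl_self]
  refine (Subgroup.eq_bot_iff_forall _).2 fun g hg =>
    FaithfulSMul.eq_of_smul_eq_smul fun a : α => ?_
  rw [one_smul]
  exact hg ⟨a, trivial⟩

lemma iSupIndep_fixingSubgroup_compl {ι : Type*} {s : ι → Set α}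
    (hs : Pairwise (Function.onFun Disjoint s)) :
    iSupIndep fun i => fixingSubgroup G (s i)ᶜ := fun i =>
  (disjoint_fixingSubgroup_compl (s i)).symm.mono_right <| iSup₂_le fun _ hji =>
    fixingSubgroup_antitone G α (hs hji.symm).subset_compl_right

lemma commute_of_mem_fixingSubgroup_compl {s t : Set α} (hst : Disjoint s t) {x y : G}
    (hx : x ∈ fixingSubgroup G sᶜ) (hy : y ∈ fixingSubgroup G tᶜ) : Commute x y := by
  have hperm : (toPerm x : Equiv.Perm α).Disjoint (toPerm y) := fun a => by
    by_cases ha : a ∈ s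
    · exact .inr (hy ⟨a, hst.notMem_of_mem_left ha⟩)
    · exact .inl (hx ⟨a, ha⟩)
  exact hperm.commute.of_map (f := toPermHom G α) toPerm_injective

end Faithful

end GroupTheory

namespace Vertex

variable {m : ℕ → ℕ} {u v w : Vertex m}

lemma IsPrefix.refl (v : Vertex m) : IsPrefix v v := ⟨le_rfl, fun _ => rfl⟩

lemma IsPrefix.trans (huv : IsPrefix u v) (hvw : IsPrefix v w) : IsPrefix u w := by
  obtain ⟨huv_le, huv⟩ := huv
  obtain ⟨hvw_le, hvw⟩ := hvw
  exact ⟨huv_le.trans hvw_le, fun i => (hvw (Fin.castLE huv_le i)).trans (huv i)⟩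

lemma IsPrefix.of_level_le (hu : IsPrefix u w) (hv : IsPrefix v w) (h : u.1 ≤ v.1) :
    IsPrefix u v := by
  obtain ⟨_, hu⟩ := hu
  obtain ⟨_, hv⟩ := hv
  exact ⟨h, fun i => (hv (Fin.castLE h i)).symm.trans (hu i)⟩

lemma IsPrefix.eq_of_level_eq (huv : IsPrefix u v) (h : u.1 = v.1) : u = v := by
  obtain ⟨n, x⟩ := u
  obtain ⟨k, y⟩ := v
  obtain rfl : n = k := h
  obtain ⟨_, hxy⟩ := huv
  exact congrArg (Sigma.mk n) (funext fun i => (hxy i).symm)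

lemma exists_isPrefix_level_eq {n : ℕ} (h : n ≤ w.1) : ∃ v : Vertex m, v.1 = n ∧ IsPrefix v w :=
  ⟨⟨n, fun i => w.2 (Fin.castLE h i)⟩, rfl, h, fun _ => rfl⟩

lemma exists_isChild {n : ℕ} (h : w.1 = n + 1) : ∃ v : Vertex m, v.1 = n ∧ IsChild v w := by
  obtain ⟨v, hv, hvw⟩ := exists_isPrefix_level_eq (w := w) (n := n) (by omega)
  exact ⟨v, hv, by omega, hvw⟩

lemma isPrefix_iff_reflTransGen : IsPrefix v w ↔ Relation.ReflTransGen IsChild v w := by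
  constructor
  · intro h
    obtain ⟨k, hk⟩ := Nat.exists_eq_add_of_le h.1
    induction k generalizing w with
    | zero => exact h.eq_of_level_eq hk.symm ▸ .refl
    | succ k ih =>
      obtain ⟨p, hp, hpw⟩ := exists_isChild (n := v.1 + k) hk
      exact (ih (h.of_level_le hpw.2 (by omega)) hp).tail hpw
  · intro h
    induction h with
    | refl => exact .refl v
    | tail _ hchild ih => exact ih.trans hchild.2

/-- The vertex set of the subtree `T_v`, consisting of `v` and its descendants. -/
def subtree (v : Vertex m) : Set (Vertex m) := {w | IsPrefix v w}

lemma subtree_subset_subtree (h : IsPrefix u v) : subtree v ⊆ subtree u := fun _ => h.trans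

lemma disjoint_subtree (h : u.1 = v.1) (huv : u ≠ v) : Disjoint (subtree u) (subtree v) :=
  Set.disjoint_left.2 fun _ hu hv => huv ((hu.of_level_le hv h.le).eq_of_level_eq h)

end Vertex

section Layer

variable (m : ℕ → ℕ) (n : ℕ)

lemma layer_eq_range :
    layer m n = Set.range fun x : ∀ i : Fin n, Fin (m i) => (⟨n, x⟩ : Vertex m) := by
  ext v
  exact ⟨by rintro rfl; exact ⟨v.2, rfl⟩, by rintro ⟨x, rfl⟩; rfl⟩

lemma finite_layer : (layer m n).Finite := layer_eq_range m n ▸ Set.finite_range _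

lemma card_layer : Nat.card (layer m n) = ∏ i : Fin n, m i := by
  have hrange : Nat.card (layer m n) = Nat.card (∀ i : Fin n, Fin (m i)) :=
    layer_eq_range m n ▸ Nat.card_range_of_injective fun _ _ h => sigma_mk_injective h
  simp only [hrange, Nat.card_pi, Nat.card_fin]

end Layer

/-- An action on the rooted tree of type `m` by tree automorphisms. -/
class IsTreeAction (m : ℕ → ℕ) (Γ : Type*) [Group Γ] [MulAction Γ (Vertex m)] : Prop where
  isChild_smul (g : Γ) {v w : Vertex m} : v.IsChild w → (g • v).IsChild (g • w)

/-- A micro-supported action on the rooted tree of type `m`: each subtree `T_v` supports a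
nontrivial element. -/
class IsMicroSupported (m : ℕ → ℕ) (Γ : Type*) [Group Γ] [MulAction Γ (Vertex m)] : Prop where
  rist_ne_bot (v : Vertex m) : rist Γ v ≠ ⊥

/-- A weakly branch group on the rooted tree of type `m`: the weakening of `IsBranchGroup` in which
rigid stabilizers are only required to be nontrivial. -/
class IsWeaklyBranchGroup (m : ℕ → ℕ) (G : Type*) [Group G] [MulAction G (Vertex m)] : Prop
    extends FaithfulSMul G (Vertex m), IsTreeAction m G, IsMicroSupported m G where
  exists_smul_eq (v w : Vertex m) : v.1 = w.1 → ∃ g : G, g • v = w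

section TreeAction

open MulAction Vertex
open scoped Pointwise commutatorElement

variable {m : ℕ → ℕ} {Γ : Type*} [Group Γ] [MulAction Γ (Vertex m)]

lemma rist_eq_fixingSubgroup (v : Vertex m) : rist Γ v = fixingSubgroup Γ (subtree v)ᶜ := by
  ext g
  simp [rist, Subgroup.mem_iInf, mem_fixingSubgroup_iff, subtree]

lemma rist_subgroup (H : Subgroup Γ) (v : Vertex m) : rist H v = (rist Γ v).subgroupOf H := by
  ext h
  simp [rist, Subgroup.mem_iInf, Subgroup.mem_subgroupOf, Subgroup.smul_def]

lemma rist_le_rist {u v : Vertex m} (h : IsPrefix u v) : rist Γ v ≤ rist Γ u := by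
  rw [rist_eq_fixingSubgroup, rist_eq_fixingSubgroup]
  exact fixingSubgroup_antitone Γ _ (Set.compl_subset_compl.2 (subtree_subset_subtree h))

lemma smul_eq_of_mem_rist {v w : Vertex m} {g : Γ} (hg : g ∈ rist Γ v) (h : ¬ IsPrefix v w) :
    g • w = w := by
  rw [rist_eq_fixingSubgroup] at hg
  exact hg ⟨w, h⟩

instance (H : Subgroup Γ) [IsTreeAction m Γ] : IsTreeAction m H where
  isChild_smul h := IsTreeAction.isChild_smul (h : Γ)

section IsTreeAction

variable [IsTreeAction m Γ] (g : Γ)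

lemma level_smul (v : Vertex m) : (g • v).1 = v.1 := by
  induction hn : v.1 generalizing v with
  | zero =>
    by_contra hne
    obtain ⟨k, hk⟩ := Nat.exists_eq_succ_of_ne_zero hne
    obtain ⟨p, -, hp⟩ := exists_isChild hk
    have hchild := IsTreeAction.isChild_smul g⁻¹ hp
    rw [inv_smul_smul] at hchild
    exact absurd (hn.symm.trans hchild.1) (by simp)
  | succ n ih =>
    obtain ⟨p, hp, hchild⟩ := exists_isChild hn
    rw [(IsTreeAction.isChild_smul g hchild).1, ih p hp]

lemma isPrefix_smul {v w : Vertex m} (h : IsPrefix v w) : IsPrefix (g • v) (g • w) := by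
  rw [isPrefix_iff_reflTransGen] at h ⊢
  exact Relation.ReflTransGen.lift (g • ·) (fun _ _ => IsTreeAction.isChild_smul g) _ _ h

lemma smul_subtree (v : Vertex m) : g • subtree v = subtree (g • v) := by
  ext w
  rw [Set.mem_smul_set_iff_inv_smul_mem]
  constructor
  · intro (h : IsPrefix v (g⁻¹ • w))
    exact smul_inv_smul g w ▸ isPrefix_smul g h
  · intro (h : IsPrefix (g • v) w)
    exact show IsPrefix v (g⁻¹ • w) from inv_smul_smul g v ▸ isPrefix_smul g⁻¹ h

lemma notMem_fixedPoints_of_isPrefix {u w : Vertex m} (h : IsPrefix u w)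
    (hu : u ∉ fixedPoints Γ (Vertex m)) : w ∉ fixedPoints Γ (Vertex m) := by
  contrapose! hu
  intro g
  have hgw : IsPrefix (g • u) w := hu g ▸ isPrefix_smul g h
  exact (hgw.of_level_le h (level_smul g u).le).eq_of_level_eq (level_smul g u)

lemma conj_mem_rist {v : Vertex m} {x : Γ} (hx : x ∈ rist Γ v) :
    g * x * g⁻¹ ∈ rist Γ (g • v) := by
  rw [rist_eq_fixingSubgroup] at hx ⊢
  exact Set.conj_mem_fixingSubgroup (by rw [Set.smul_set_compl, smul_subtree]) hx

lemma rist_smul_eq_bot {v : Vertex m} (h : rist Γ v = ⊥) : rist Γ (g • v) = ⊥ := by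
  refine (Subgroup.eq_bot_iff_forall _).2 fun x hx => ?_
  have hconj := conj_mem_rist g⁻¹ hx
  rw [inv_smul_smul, h, Subgroup.mem_bot] at hconj
  exact conj_eq_one_iff.1 hconj

lemma mem_fixedPoints_rist (v : Vertex m) : v ∈ fixedPoints (rist Γ v) (Vertex m) := by
  rintro ⟨g, hg⟩
  change g • v = v
  by_cases h : IsPrefix v (g • v)
  · exact (h.eq_of_level_eq (level_smul g v).symm).symm
  · exact smul_left_cancel g (smul_eq_of_mem_rist hg h)

lemma smul_iUnion_subtree_orbit (v : Vertex m) :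
    g • ⋃ w ∈ orbit Γ v, subtree w = ⋃ w ∈ orbit Γ v, subtree w := by
  simp only [orbit, Set.biUnion_range, Set.smul_set_iUnion, smul_subtree, smul_smul]
  exact (Equiv.mulLeft g).surjective.iUnion_comp fun k => subtree (k • v)

lemma disjoint_iUnion_subtree_orbit {v w : Vertex m} (h : v.1 = w.1)
    (hvw : orbit Γ v ≠ orbit Γ w) :
    Disjoint (⋃ u ∈ orbit Γ v, subtree u) (⋃ u ∈ orbit Γ w, subtree u) := by
  simp only [orbit, Set.biUnion_range, Set.disjoint_iUnion_left, Set.disjoint_iUnion_right]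
  intro k g
  refine disjoint_subtree (by rw [level_smul, level_smul, h]) fun hgk => hvw ?_
  rw [← orbit_smul g v, ← orbit_smul k w, hgk]

end IsTreeAction

section Faithful

variable [FaithfulSMul Γ (Vertex m)]

lemma disjoint_rist {u v : Vertex m} (h : u.1 = v.1) (huv : u ≠ v) :
    Disjoint (rist Γ u) (rist Γ v) := by
  rw [rist_eq_fixingSubgroup, rist_eq_fixingSubgroup]
  exact (disjoint_fixingSubgroup_compl _).symm.mono_right
    (fixingSubgroup_antitone Γ _ (disjoint_subtree h huv).subset_compl_right)

lemma commute_of_mem_rist {u v : Vertex m} (h : u.1 = v.1) (huv : u ≠ v) {x y : Γ}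
    (hx : x ∈ rist Γ u) (hy : y ∈ rist Γ v) : Commute x y := by
  rw [rist_eq_fixingSubgroup] at hx hy
  exact commute_of_mem_fixingSubgroup_compl (disjoint_subtree h huv) hx hy

lemma commutator_rist_le [IsTreeAction m Γ] {N : Subgroup Γ} [N.Normal] {v : Vertex m}
    (hv : v ∉ fixedPoints N (Vertex m)) : ⁅rist Γ v, rist Γ v⁆ ≤ N := by
  obtain ⟨g, hgv⟩ : ∃ g : N, g • v ≠ v := by simpa [mem_fixedPoints] using hv
  exact Subgroup.commutator_le.2 fun a ha b hb => commutatorElement_mem_of_commute_conj g.2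
    (commute_of_mem_rist (level_smul g v) hgv (conj_mem_rist (g : Γ) ha) hb)

variable [IsMicroSupported m Γ]

lemma exists_isPrefix_notMem_fixedPoints_rist (v : Vertex m) :
    ∃ u : Vertex m, IsPrefix v u ∧ u ∉ fixedPoints (rist Γ v) (Vertex m) := by
  obtain ⟨u, hu⟩ := exists_notMem_fixedPoints (α := Vertex m)
    (IsMicroSupported.rist_ne_bot (Γ := Γ) v)
  refine ⟨u, ?_, hu⟩
  contrapose! hu
  rintro ⟨g, hg⟩
  exact smul_eq_of_mem_rist (Γ := Γ) hg hu

variable [IsTreeAction m Γ]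

lemma exists_extension_level_eq (Γ : Type*) [Group Γ] [MulAction Γ (Vertex m)]
    [FaithfulSMul Γ (Vertex m)] [IsMicroSupported m Γ] [IsTreeAction m Γ]
    (v : Vertex m) {n : ℕ} (hn : v.1 ≤ n) : ∃ w : Vertex m, w.1 = n ∧ IsPrefix v w := by
  induction n, hn using Nat.le_induction with
  | base => exact ⟨v, rfl, .refl v⟩
  | succ n _ ih =>
    obtain ⟨w, rfl, hvw⟩ := ih
    obtain ⟨u, hwu, hu⟩ := exists_isPrefix_notMem_fixedPoints_rist (Γ := Γ) w
    have hlt : w.1 < u.1 := by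
      refine hwu.1.lt_of_ne fun h => hu ?_
      exact hwu.eq_of_level_eq h ▸ mem_fixedPoints_rist w
    obtain ⟨p, hp, hpu⟩ := exists_isPrefix_level_eq (Nat.succ_le_of_lt hlt)
    exact ⟨p, hp, hvw.trans (hwu.of_level_le hpu (by omega))⟩

lemma exists_rist_lt_rist (v : Vertex m) : ∃ u : Vertex m, rist Γ u < rist Γ v := by
  obtain ⟨u, hvu, hu⟩ := exists_isPrefix_notMem_fixedPoints_rist (Γ := Γ) v
  refine ⟨u, (rist_le_rist hvu).lt_of_ne fun h => hu ?_⟩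
  exact h ▸ mem_fixedPoints_rist u

lemma infinite_rist (v : Vertex m) : Infinite (rist Γ v) := by
  refine not_finite_iff_infinite.1 fun hfin => ?_
  induction hk : Nat.card (rist Γ v) using Nat.strong_induction_on generalizing v with
  | _ k ih =>
    obtain ⟨u, hu⟩ := exists_rist_lt_rist (Γ := Γ) v
    have hlt : Nat.card (rist Γ u) < k :=
      hk ▸ Set.ncard_lt_ncard (SetLike.coe_strictMono hu) (Set.toFinite _)
    exact ih _ hlt u (Finite.Set.subset _ hu.le) rfl

instance (H : Subgroup Γ) [H.FiniteIndex] : IsMicroSupported m H where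
  rist_ne_bot v h := by
    have := infinite_rist (Γ := Γ) v
    rw [rist_subgroup, Subgroup.subgroupOf_eq_bot] at h
    have := finite_of_disjoint_of_finiteIndex h.symm
    exact not_finite (rist Γ v)

lemma commutator_rist_ne_bot (v : Vertex m) : ⁅rist Γ v, rist Γ v⁆ ≠ ⊥ := by
  intro hbot
  rw [Subgroup.commutator_eq_bot_iff_le_centralizer] at hbot
  obtain ⟨u, hvu, hu⟩ := exists_isPrefix_notMem_fixedPoints_rist (Γ := Γ) v
  obtain ⟨g, hgu⟩ : ∃ g : rist Γ v, g • u ≠ u := by simpa [mem_fixedPoints] using hu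
  refine IsMicroSupported.rist_ne_bot (Γ := Γ) u
    ((Subgroup.eq_bot_iff_forall _).2 fun b hb => ?_)
  have hcomm : g * b = b * g :=
    Subgroup.mem_centralizer_iff.1 (hbot (rist_le_rist hvu hb)) g g.2
  have hconj := conj_mem_rist (g : Γ) hb
  rw [hcomm, mul_inv_cancel_right] at hconj
  exact Subgroup.disjoint_def.1 (disjoint_rist (level_smul (g : Γ) u) hgu) hconj hb

lemma exists_forall_layer_notMem_fixedPoints {ι : Type*} [Finite ι] {N : ι → Subgroup Γ}
    (hN : ∀ i, N i ≠ ⊥) :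
    ∃ n, ∀ i, ∃ w ∈ layer m n, w ∉ fixedPoints (N i) (Vertex m) := by
  choose u hu using fun i => exists_notMem_fixedPoints (α := Vertex m) (hN i)
  obtain ⟨n, hn⟩ := Finite.exists_le fun i => (u i).1
  refine ⟨n, fun i => ?_⟩
  obtain ⟨w, hw, huw⟩ := exists_extension_level_eq Γ (u i) (hn i)
  exact ⟨w, hw, notMem_fixedPoints_of_isPrefix huw (hu i)⟩

lemma orbit_ne_orbit_of_disjoint {M N : Subgroup Γ} [M.Normal] [N.Normal] (hMN : Disjoint M N)
    {v w : Vertex m} (hv : v ∉ fixedPoints M (Vertex m)) (hw : w ∉ fixedPoints N (Vertex m)) :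
    orbit Γ v ≠ orbit Γ w := by
  intro h
  obtain ⟨g, rfl⟩ := orbit_eq_iff.1 h
  have hwM : w ∉ fixedPoints M (Vertex m) := fun hw => hv (smul_mem_fixedPoints_of_normal g hw)
  have hbot : ⁅rist Γ w, rist Γ w⁆ ≤ ⊥ := hMN (commutator_rist_le hwM) (commutator_rist_le hw)
  exact commutator_rist_ne_bot w (le_bot_iff.1 hbot)

theorem exists_card_le_card_orbits {ι : Type*} [Finite ι] {N : ι → Subgroup Γ}
    (hnormal : ∀ i, (N i).Normal) (hne : ∀ i, N i ≠ ⊥)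
    (hdisj : Pairwise (Function.onFun Disjoint N)) :
    ∃ n, Nat.card ι ≤ Nat.card (orbit Γ '' layer m n) := by
  obtain ⟨n, hn⟩ := exists_forall_layer_notMem_fixedPoints (m := m) hne
  choose w hw hmoved using hn
  have hinj : Function.Injective fun i => orbit Γ (w i) := fun i j hij => by
    by_contra hij_ne
    exact orbit_ne_orbit_of_disjoint (hdisj hij_ne) (hmoved i) (hmoved j) hij
  refine ⟨n, (Nat.card_range_of_injective hinj).symm.trans_le ?_⟩
  refine Nat.card_mono ((finite_layer m n).image _) ?_
  exact Set.range_subset_iff.2 fun i => Set.mem_image_of_mem _ (hw i)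

theorem hasIndepFamily_card_orbits (n : ℕ) :
    HasIndepFamily Γ (Nat.card (orbit Γ '' layer m n)) := by
  have := ((finite_layer m n).image (orbit Γ)).to_subtype
  let N (O : orbit Γ '' layer m n) : Subgroup Γ := fixingSubgroup Γ (⋃ v ∈ O.1, subtree v)ᶜ
  have hnormal : ∀ O, (N O).Normal := by
    rintro ⟨_, v, -, rfl⟩
    exact fixingSubgroup_compl_normal fun g => smul_iUnion_subtree_orbit g v
  have hinf : ∀ O, Infinite (N O) := by
    rintro ⟨_, v, -, rfl⟩
    have := infinite_rist (Γ := Γ) v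
    have hle : rist Γ v ≤ fixingSubgroup Γ (⋃ w ∈ orbit Γ v, subtree w)ᶜ := by
      rw [rist_eq_fixingSubgroup]
      exact fixingSubgroup_antitone Γ _
        (Set.compl_subset_compl.2 (Set.subset_biUnion_of_mem (mem_orbit_self v)))
    exact Infinite.of_injective _ (Subgroup.inclusion_injective hle)
  refine hasIndepFamily_card hnormal hinf (iSupIndep_fixingSubgroup_compl ?_)
  rintro ⟨_, v, rfl, rfl⟩ ⟨_, w, hwv, rfl⟩ hne
  exact disjoint_iUnion_subtree_orbit hwv.symm fun h => hne (Subtype.ext h)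

end Faithful

end TreeAction

section BranchGroup

open MulAction Vertex

variable {m : ℕ → ℕ} {G : Type*} [Group G] [MulAction G (Vertex m)]

lemma layer_subset_orbit (htrans : ∀ v w : Vertex m, v.1 = w.1 → ∃ g : G, g • v = w)
    (v : Vertex m) : layer m v.1 ⊆ orbit G v := fun w hw => htrans v w hw.symm

lemma two_pow_le_card_layer (hm : ∀ n, 2 ≤ m n) (n : ℕ) : 2 ^ n ≤ Nat.card (layer m n) := by
  rw [card_layer]
  simpa using Finset.pow_card_le_prod Finset.univ (fun i : Fin n => m i) 2 fun i _ => hm i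

lemma IsBranchGroup.infinite (hm : ∀ n, 2 ≤ m n) (hG : IsBranchGroup m G) : Infinite G := by
  refine not_finite_iff_infinite.1 fun _ => ?_
  let v : Vertex m := ⟨Nat.card G, fun i => ⟨0, by have := hm i; omega⟩⟩
  refine (Nat.lt_two_pow_self (n := Nat.card G)).not_ge ?_
  calc 2 ^ Nat.card G ≤ Nat.card (layer m v.1) := two_pow_le_card_layer hm _
    _ ≤ Nat.card (orbit G v) := Nat.card_mono (Set.finite_range _) (layer_subset_orbit hG.trans v)
    _ ≤ Nat.card G := Finite.card_range_le _

lemma IsBranchGroup.isWeaklyBranchGroup [Infinite G] (hG : IsBranchGroup m G) :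
    IsWeaklyBranchGroup m G := by
  have : IsTreeAction m G := ⟨fun g _ _ => (hG.aut g _ _).1⟩
  refine { eq_of_smul_eq_smul := fun {g k} h => ?_, rist_ne_bot := fun v hv => ?_,
           exists_smul_eq := hG.trans }
  · exact inv_mul_eq_one.1 <| hG.faithful (g⁻¹ * k) fun v => by
      rw [mul_smul, ← h v, inv_smul_smul]
  · have hlayer : ristLayer m G v.1 = ⊥ := by
      refine iSup₂_eq_bot.2 fun w hw => ?_
      obtain ⟨g, rfl⟩ := hG.trans v w hw.symm
      exact rist_smul_eq_bot g hv
    have hbot : (⊥ : Subgroup G).FiniteIndex := hlayer ▸ hG.ristFiniteIndex v.1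
    have : Finite G := (Subgroup.finite_iff_finite_and_finiteIndex ⊥).2 ⟨inferInstance, hbot⟩
    exact not_finite G

lemma orbitsOn_eq_image (H : Subgroup G) (X : Set (Vertex m)) :
    orbitsOn G H X = orbit H '' X := by
  refine Set.image_congr fun v _ => Set.ext fun w => ?_
  simp [subOrbit, mem_orbit_iff, Subgroup.smul_def]

variable [IsWeaklyBranchGroup m G] (H : Subgroup G) [H.FiniteIndex]

lemma card_orbit_image_layer_le_index (n : ℕ) : Nat.card (orbit H '' layer m n) ≤ H.index := by
  obtain ⟨v, rfl, -⟩ := exists_extension_level_eq G (⟨0, fun i => i.elim0⟩ : Vertex m) n.zero_le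
  exact card_image_orbit_le_index H (layer_subset_orbit IsWeaklyBranchGroup.exists_smul_eq v)

end BranchGroup

theorem b_eq_max_orbits_general
    (m : ℕ → ℕ) (G : Type*) [Group G] [MulAction G (Vertex m)] [IsWeaklyBranchGroup m G]
    (H : Subgroup G) [H.FiniteIndex] :
    ∃ b : ℕ, IsGreatest {r : ℕ | HasIndepFamily ↥H r} b ∧
      IsGreatest {k : ℕ | ∃ n : ℕ, k = Nat.card (orbitsOn G H (layer m n))} b ∧
      b ≤ H.index := by
  simp only [orbitsOn_eq_image]
  have hbound : H.index ∈
      upperBounds {k | ∃ n, k = Nat.card (MulAction.orbit H '' layer m n)} := by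
    rintro _ ⟨n, rfl⟩
    exact card_orbit_image_layer_le_index H n
  obtain ⟨b, hb⟩ := BddAbove.exists_isGreatest_of_nonempty ⟨_, hbound⟩ ⟨_, 0, rfl⟩
  refine ⟨b, ⟨?_, fun r hr => ?_⟩, hb, hbound hb.1⟩
  · obtain ⟨n, rfl⟩ := hb.1
    exact hasIndepFamily_card_orbits n
  · obtain ⟨N, hnormal, hinf, hind⟩ := hasIndepFamily_iff.1 hr
    have hne : ∀ i, N i ≠ ⊥ := fun i => (Subgroup.nontrivial_iff_ne_bot _).1 inferInstance
    obtain ⟨n, hn⟩ := exists_card_le_card_orbits (m := m) hnormal hne hind.pairwiseDisjoint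
    exact (Nat.card_fin r).symm.trans_le (hn.trans (hb.2 ⟨n, rfl⟩))

/-- **Corollary.** Let `G` be a branch group on `T` and `H ≤ G` of finite index.  Then
`b(H)` is finite and is the maximum number of `H`-orbits on any layer of `T`; in
particular `b(H) ≤ |G:H|`. -/
theorem b_eq_max_orbits
    (m : ℕ → ℕ) (hm : ∀ n, 2 ≤ m n)
    (G : Type*) [Group G] [MulAction G (Vertex m)] (hG : IsBranchGroup m G)
    (H : Subgroup G) [H.FiniteIndex] :
    ∃ b : ℕ, IsGreatest {r : ℕ | HasIndepFamily ↥H r} b ∧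
      IsGreatest {k : ℕ | ∃ n : ℕ, k = Nat.card (orbitsOn G H (layer m n))} b ∧
      b ≤ H.index := by
  have := hG.infinite hm
  have := hG.isWeaklyBranchGroup
  exact b_eq_max_orbits_general m G H
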